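/- Let a > 1 and q > 1. Suppose 𝓰 : [1,∞) → [0,∞) is nonincreasing, right-continuous, with finite Stieltjes moments, and that for all t ≥ 1, −∫_t^∞ s^{q−1} d𝓰(s) ≤ a t^{q−1} 𝓰(t). Then for every p with q ≤ p < q + (q−1)/(a−1) (equivalently a(p−q) < p−1), the moment −∫_1^∞ t^{p−1} d𝓰(t) is finite and satisfies −∫_1^∞ t^{p−1} d𝓰(t) ≤ (q−1)/((p−1)−a(p−q)) · (−∫_1^∞ t^{q−1} d𝓰(t)). -/

import Mathlib

open MeasureTheory Set Filter

/-!
Write `α = q - 1`, `β = p - 1`, `r = β - α`, and let `I`, `J` be the moments of orders `α`, `β`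
over `(c, ∞)`. Splitting `t ^ r = c ^ r + ∫ s in c..t, r * s ^ (r - 1)` and applying the layer cake
formula to the measure `t ^ α dμ` gives
`J = c ^ r * I + ∫ s in (c, ∞), r * s ^ (r - 1) * (∫ t in (s, ∞), t ^ α ∂μ)`.
The hypothesis bounds the inner integral by `a * s ^ α * μ (s, ∞)`, and the layer cake formula for
`t ^ β` then bounds the outer one by `(a * r / β) * (J - c ^ β * μ (c, ∞))`. At the level `c` the
hypothesis reads `I ≤ a * c ^ α * μ (c, ∞)`, so `(1 - a * r / β) * J ≤ (α / β) * c ^ r * I`,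
provided `J` is finite. Finiteness is obtained by truncation: the image of `μ` under `t ↦ min t N`
satisfies the same hypothesis with the same `a`.
-/

theorem measure_Ioi_eq_ofReal_of_tendsto {μ : Measure ℝ} {G : ℝ → ℝ} {s l : ℝ}
    (hμ : ∀ t, s ≤ t → μ (Ioc s t) = ENNReal.ofReal (G s - G t))
    (hG : Tendsto G atTop (nhds l)) : μ (Ioi s) = ENNReal.ofReal (G s - l) := by
  have exhaust : Tendsto (fun t => μ (Ioc s t)) atTop (nhds (μ (Ioi s))) := by
    rw [← iUnion_Ioc_right s]
    exact tendsto_measure_iUnion_atTop fun x y hxy => Ioc_subset_Ioc_right hxy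
  refine tendsto_nhds_unique exhaust
    ((ENNReal.tendsto_ofReal (tendsto_const_nhds.sub hG)).congr' ?_)
  filter_upwards [eventually_ge_atTop s] with t ht using (hμ t ht).symm

theorem setLIntegral_Ioi_ofReal_intervalIntegral (μ : Measure ℝ) {c : ℝ} {g : ℝ → ℝ}
    (g_int : ∀ t, c < t → IntervalIntegrable g volume c t) (g_nonneg : ∀ t, c < t → 0 ≤ g t) :
    ∫⁻ t in Ioi c, ENNReal.ofReal (∫ s in c..t, g s) ∂μ =
      ∫⁻ s in Ioi c, μ (Ioi s) * ENNReal.ofReal (g s) := by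
  have layercake := lintegral_comp_eq_lintegral_meas_lt_mul (μ.restrict (Ioi c))
    (f := fun t => t - c) (g := fun s => g (s + c))
    (by filter_upwards [ae_restrict_mem measurableSet_Ioi] with t ht using sub_nonneg.2 ht.le)
    (by fun_prop)
    (fun t ht => by simpa using (g_int (t + c) (by linarith)).comp_add_right c)
    (by filter_upwards [ae_restrict_mem measurableSet_Ioi] with s hs
        exact g_nonneg _ (lt_add_of_pos_left c hs))
  simp only [intervalIntegral.integral_comp_add_right, zero_add, sub_add_cancel] at layercake
  rw [layercake, ← (measurePreserving_add_right volume c).setLIntegral_comp_preimage_emb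
    (measurableEmbedding_addRight c) (fun s => μ (Ioi s) * ENNReal.ofReal (g s)) (Ioi c),
    preimage_add_const_Ioi, sub_self]
  refine setLIntegral_congr_fun measurableSet_Ioi fun s hs => ?_
  have tail : {t | s < t - c} ∩ Ioi c = Ioi (s + c) := by
    ext t
    simp only [mem_inter_iff, mem_ofPred_eq, mem_Ioi, lt_sub_iff_add_lt] at hs ⊢
    constructor <;> grind
  rw [Measure.restrict_apply' measurableSet_Ioi, tail]

theorem setLIntegral_Ioi_rpow_sub_rpow (μ : Measure ℝ) {c r : ℝ} (hc : 0 < c) (hr : 0 ≤ r) :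
    ∫⁻ t in Ioi c, ENNReal.ofReal (t ^ r - c ^ r) ∂μ =
      ∫⁻ s in Ioi c, μ (Ioi s) * ENNReal.ofReal (r * s ^ (r - 1)) := by
  have g_int : ∀ t, c < t → IntervalIntegrable (fun s : ℝ => r * s ^ (r - 1)) volume c t :=
    fun t ht => (intervalIntegral.intervalIntegrable_rpow
      (Or.inr (notMem_uIcc_of_lt hc (hc.trans ht)))).const_mul r
  rw [← setLIntegral_Ioi_ofReal_intervalIntegral μ g_int
    fun t ht => mul_nonneg hr (Real.rpow_nonneg (hc.trans ht).le _)]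
  refine setLIntegral_congr_fun measurableSet_Ioi fun t ht => ?_
  congr 1
  refine (intervalIntegral.integral_eq_sub_of_hasDerivAt (f := fun s => s ^ r) (fun s hs => ?_)
    (g_int t ht)).symm
  rw [uIcc_of_le ht.le] at hs
  exact Real.hasDerivAt_rpow_const (Or.inl (hc.trans_le hs.1).ne')

theorem setLIntegral_Ioi_rpow_sub_rpow_le {μ ν : Measure ℝ} {a c α r : ℝ} (hc : 0 < c)
    (hr : 0 ≤ r) (hαr : 0 < α + r)
    (hνμ : ∀ t, c ≤ t → ν (Ioi t) ≤ ENNReal.ofReal (a * t ^ α) * μ (Ioi t)) :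
    ∫⁻ t in Ioi c, ENNReal.ofReal (t ^ r - c ^ r) ∂ν ≤
      ENNReal.ofReal (a * r / (α + r)) *
        ∫⁻ t in Ioi c, ENNReal.ofReal (t ^ (α + r) - c ^ (α + r)) ∂μ := by
  rw [setLIntegral_Ioi_rpow_sub_rpow ν hc hr, setLIntegral_Ioi_rpow_sub_rpow μ hc hαr.le,
    ← lintegral_const_mul' _ _ ENNReal.ofReal_ne_top]
  refine setLIntegral_mono' measurableSet_Ioi fun s hs => ?_
  have hs₀ : 0 < s := hc.trans hs
  have coeff : a * s ^ α * (r * s ^ (r - 1)) =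
      a * r / (α + r) * ((α + r) * s ^ (α + r - 1)) := by
    rw [add_sub_assoc, Real.rpow_add hs₀]
    field_simp
  calc ν (Ioi s) * ENNReal.ofReal (r * s ^ (r - 1))
      ≤ ENNReal.ofReal (a * s ^ α) * μ (Ioi s) * ENNReal.ofReal (r * s ^ (r - 1)) := by
        gcongr
        exact hνμ s (le_of_lt hs)
    _ = ENNReal.ofReal (a * s ^ α * (r * s ^ (r - 1))) * μ (Ioi s) := by
        rw [mul_right_comm, ← ENNReal.ofReal_mul' (by positivity)]
    _ = ENNReal.ofReal (a * r / (α + r)) *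
          (μ (Ioi s) * ENNReal.ofReal ((α + r) * s ^ (α + r - 1))) := by
        rw [coeff, ENNReal.ofReal_mul' (by positivity), mul_assoc, mul_comm (μ _)]

theorem setLIntegral_Ioi_rpow_eq_add (μ : Measure ℝ) {c r : ℝ} (hc : 0 < c) (hr : 0 ≤ r) :
    ∫⁻ t in Ioi c, ENNReal.ofReal (t ^ r) ∂μ =
      ∫⁻ t in Ioi c, ENNReal.ofReal (t ^ r - c ^ r) ∂μ + ENNReal.ofReal (c ^ r) * μ (Ioi c) := by
  rw [← setLIntegral_const, ← lintegral_add_right _ measurable_const]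
  refine setLIntegral_congr_fun measurableSet_Ioi fun t ht => ?_
  have hct : c ^ r ≤ t ^ r := Real.rpow_le_rpow hc.le ht.le hr
  rw [← ENNReal.ofReal_add (sub_nonneg.2 hct) (by positivity), sub_add_cancel]

theorem setLIntegral_Ioi_rpow_add_le {μ ν : Measure ℝ} {a c α r : ℝ} (hc : 0 < c)
    (hr : 0 ≤ r) (hαr : 0 < α + r)
    (hνμ : ∀ t, c ≤ t → ν (Ioi t) ≤ ENNReal.ofReal (a * t ^ α) * μ (Ioi t)) :
    ∫⁻ t in Ioi c, ENNReal.ofReal (t ^ r) ∂ν + ENNReal.ofReal (r / (α + r) * c ^ r) * ν (Ioi c) ≤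
      ENNReal.ofReal (a * r / (α + r)) * ∫⁻ t in Ioi c, ENNReal.ofReal (t ^ (α + r)) ∂μ +
        ENNReal.ofReal (c ^ r) * ν (Ioi c) := by
  have boundary : ENNReal.ofReal (r / (α + r) * c ^ r) * ν (Ioi c) ≤
      ENNReal.ofReal (a * r / (α + r)) * (ENNReal.ofReal (c ^ (α + r)) * μ (Ioi c)) :=
    calc ENNReal.ofReal (r / (α + r) * c ^ r) * ν (Ioi c)
        ≤ ENNReal.ofReal (r / (α + r) * c ^ r) *
            (ENNReal.ofReal (a * c ^ α) * μ (Ioi c)) := by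
          gcongr
          exact hνμ c le_rfl
      _ = ENNReal.ofReal (a * r / (α + r)) * (ENNReal.ofReal (c ^ (α + r)) * μ (Ioi c)) := by
          rw [← mul_assoc, ← mul_assoc, ← ENNReal.ofReal_mul (by positivity),
            ← ENNReal.ofReal_mul' (by positivity), Real.rpow_add hc]
          congr 2
          ring
  calc ∫⁻ t in Ioi c, ENNReal.ofReal (t ^ r) ∂ν +
        ENNReal.ofReal (r / (α + r) * c ^ r) * ν (Ioi c)
      = ∫⁻ t in Ioi c, ENNReal.ofReal (t ^ r - c ^ r) ∂ν +
          ENNReal.ofReal (r / (α + r) * c ^ r) * ν (Ioi c) +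
          ENNReal.ofReal (c ^ r) * ν (Ioi c) := by
        rw [setLIntegral_Ioi_rpow_eq_add ν hc hr, add_right_comm]
    _ ≤ ENNReal.ofReal (a * r / (α + r)) *
          ∫⁻ t in Ioi c, ENNReal.ofReal (t ^ (α + r) - c ^ (α + r)) ∂μ +
          ENNReal.ofReal (a * r / (α + r)) * (ENNReal.ofReal (c ^ (α + r)) * μ (Ioi c)) +
          ENNReal.ofReal (c ^ r) * ν (Ioi c) := by
        gcongr
        exact setLIntegral_Ioi_rpow_sub_rpow_le hc hr hαr hνμ
    _ = _ := by rw [← mul_add, ← setLIntegral_Ioi_rpow_eq_add μ hc hαr.le]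

/-- The one-dimensional reverse Hölder condition of Gehring's lemma: above every level `t ≥ c`, the
`α`-moment of `μ` is at most `a` times `t ^ α * μ (Ioi t)`, its trivial lower bound for `0 ≤ α`. -/
def TailMomentBound (μ : Measure ℝ) (c α a : ℝ) : Prop :=
  ∀ t, c ≤ t → ∫⁻ s in Ioi t, ENNReal.ofReal (s ^ α) ∂μ ≤ ENNReal.ofReal (a * t ^ α) * μ (Ioi t)

namespace TailMomentBound

variable {μ : Measure ℝ} {a c α β : ℝ}

theorem setLIntegral_rpow_add_le (h : TailMomentBound μ c α a) (hc : 0 < c) (hαβ : α ≤ β)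
    (hβ : 0 < β) :
    ∫⁻ t in Ioi c, ENNReal.ofReal (t ^ β) ∂μ +
        ENNReal.ofReal ((β - α) / β * c ^ (β - α)) * ∫⁻ t in Ioi c, ENNReal.ofReal (t ^ α) ∂μ ≤
      ENNReal.ofReal (a * (β - α) / β) * ∫⁻ t in Ioi c, ENNReal.ofReal (t ^ β) ∂μ +
        ENNReal.ofReal (c ^ (β - α)) * ∫⁻ t in Ioi c, ENNReal.ofReal (t ^ α) ∂μ := by
  set ν : Measure ℝ := μ.withDensity fun s => ENNReal.ofReal (s ^ α)
  have ν_Ioi (t : ℝ) : ν (Ioi t) = ∫⁻ s in Ioi t, ENNReal.ofReal (s ^ α) ∂μ :=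
    withDensity_apply _ measurableSet_Ioi
  have ν_moment : ∫⁻ t in Ioi c, ENNReal.ofReal (t ^ (β - α)) ∂ν =
      ∫⁻ t in Ioi c, ENNReal.ofReal (t ^ β) ∂μ := by
    rw [setLIntegral_withDensity_eq_setLIntegral_mul μ (by fun_prop) (by fun_prop)
      measurableSet_Ioi]
    refine setLIntegral_congr_fun measurableSet_Ioi fun t ht => ?_
    have ht₀ : 0 < t := hc.trans ht
    rw [Pi.mul_apply, ← ENNReal.ofReal_mul (by positivity), ← Real.rpow_add ht₀,
      add_sub_cancel]
  have key := setLIntegral_Ioi_rpow_add_le (μ := μ) (ν := ν) hc (sub_nonneg.2 hαβ)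
    (by rwa [add_sub_cancel]) fun t ht => (ν_Ioi t).trans_le (h t ht)
  rwa [ν_moment, ν_Ioi, add_sub_cancel] at key

theorem setLIntegral_rpow_le_of_ne_top (h : TailMomentBound μ c α a) (hc : 0 < c) (ha : 0 ≤ a)
    (hαβ : α ≤ β) (hβ : a * (β - α) < β)
    (hfin_α : ∫⁻ t in Ioi c, ENNReal.ofReal (t ^ α) ∂μ ≠ ⊤)
    (hfin_β : ∫⁻ t in Ioi c, ENNReal.ofReal (t ^ β) ∂μ ≠ ⊤) :
    ∫⁻ t in Ioi c, ENNReal.ofReal (t ^ β) ∂μ ≤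
      ENNReal.ofReal (α * c ^ (β - α) / (β - a * (β - α))) *
        ∫⁻ t in Ioi c, ENNReal.ofReal (t ^ α) ∂μ := by
  have hr : 0 ≤ β - α := sub_nonneg.2 hαβ
  have hβ₀ : 0 < β := (mul_nonneg ha hr).trans_lt hβ
  have hgap : 0 < β - a * (β - α) := sub_pos.2 hβ
  have absorb := h.setLIntegral_rpow_add_le hc hαβ hβ₀
  lift ∫⁻ t in Ioi c, ENNReal.ofReal (t ^ α) ∂μ to NNReal using hfin_α with I
  lift ∫⁻ t in Ioi c, ENNReal.ofReal (t ^ β) ∂μ to NNReal using hfin_β with J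
  have absorb_real : J + (β - α) / β * c ^ (β - α) * I ≤
      a * (β - α) / β * J + c ^ (β - α) * I := by
    simp only [← ENNReal.ofReal_coe_nnreal] at absorb
    rwa [← ENNReal.ofReal_mul (by positivity), ← ENNReal.ofReal_mul (by positivity),
      ← ENNReal.ofReal_mul (by positivity), ← ENNReal.ofReal_add (by positivity) (by positivity),
      ← ENNReal.ofReal_add (by positivity) (by positivity),
      ENNReal.ofReal_le_ofReal_iff (by positivity)] at absorb
  rw [← ENNReal.ofReal_coe_nnreal, ← ENNReal.ofReal_coe_nnreal,
    ← ENNReal.ofReal_mul' I.coe_nonneg]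
  refine ENNReal.ofReal_le_ofReal ?_
  rw [div_mul_eq_mul_div, le_div_iff₀ hgap]
  have cleared := mul_le_mul_of_nonneg_left absorb_real hβ₀.le
  field_simp at cleared
  linarith

theorem map_min (h : TailMomentBound μ c α a) (hc : 0 < c) (hα : 0 ≤ α) (N : ℝ) :
    TailMomentBound (μ.map (min · N)) c α a := by
  intro t ht
  have hmin : Measurable fun s : ℝ => min s N := by fun_prop
  rw [setLIntegral_map measurableSet_Ioi (by fun_prop) hmin,
    Measure.map_apply hmin measurableSet_Ioi]
  rcases lt_or_ge t N with htN | hNt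
  · have tail : (min · N) ⁻¹' Ioi t = Ioi t := by ext s; simp [htN]
    rw [tail]
    refine (setLIntegral_mono' measurableSet_Ioi fun s hs => ?_).trans (h t ht)
    have hs₀ : 0 < min s N := lt_min ((hc.trans_le ht).trans hs) ((hc.trans_le ht).trans htN)
    gcongr
    exact min_le_left s N
  · have tail : (min · N) ⁻¹' Ioi t = ∅ := by ext s; simp [hNt]
    simp only [tail, Measure.restrict_empty, lintegral_zero_measure, zero_le]

theorem setLIntegral_min_rpow_le (h : TailMomentBound μ c α a) (hμ : μ (Ioi c) ≠ ⊤) (hc : 0 < c)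
    (ha : 0 ≤ a) (hα : 0 ≤ α) (hαβ : α ≤ β) (hβ : a * (β - α) < β) {N : ℝ} (hN : c < N) :
    ∫⁻ t in Ioi c, ENNReal.ofReal (min t N ^ β) ∂μ ≤
      ENNReal.ofReal (α * c ^ (β - α) / (β - a * (β - α))) *
        ∫⁻ t in Ioi c, ENNReal.ofReal (t ^ α) ∂μ := by
  have map_moment (r : ℝ) : ∫⁻ t in Ioi c, ENNReal.ofReal (t ^ r) ∂μ.map (min · N) =
      ∫⁻ t in Ioi c, ENNReal.ofReal (min t N ^ r) ∂μ := by
    have tail : (min · N) ⁻¹' Ioi c = Ioi c := by ext s; simp [hN]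
    rw [setLIntegral_map measurableSet_Ioi (by fun_prop) (by fun_prop), tail]
  have min_rpow_le {r t : ℝ} (hr : 0 ≤ r) (ht : t ∈ Ioi c) :
      min t N ^ r ≤ t ^ r ∧ min t N ^ r ≤ N ^ r :=
    have hmin : 0 ≤ min t N := hc.le.trans (le_min (le_of_lt ht) hN.le)
    ⟨Real.rpow_le_rpow hmin (min_le_left t N) hr, Real.rpow_le_rpow hmin (min_le_right t N) hr⟩
  have moment_ne_top {r : ℝ} (hr : 0 ≤ r) :
      ∫⁻ t in Ioi c, ENNReal.ofReal (t ^ r) ∂μ.map (min · N) ≠ ⊤ := by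
    rw [map_moment]
    refine ne_top_of_le_ne_top (ENNReal.mul_ne_top ENNReal.ofReal_ne_top hμ)
      ((setLIntegral_mono' measurableSet_Ioi fun t ht => ?_).trans_eq
        (setLIntegral_const _ (ENNReal.ofReal (N ^ r))))
    exact ENNReal.ofReal_le_ofReal (min_rpow_le hr ht).2
  have truncated := (h.map_min hc hα N).setLIntegral_rpow_le_of_ne_top hc ha hαβ hβ
    (moment_ne_top hα) (moment_ne_top (hα.trans hαβ))
  rw [map_moment, map_moment] at truncated
  refine truncated.trans (mul_le_mul_right (setLIntegral_mono' measurableSet_Ioi fun t ht => ?_) _)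
  exact ENNReal.ofReal_le_ofReal (min_rpow_le hα ht).1

theorem setLIntegral_rpow_le (h : TailMomentBound μ c α a) (hμ : μ (Ioi c) ≠ ⊤) (hc : 0 < c)
    (ha : 0 ≤ a) (hα : 0 ≤ α) (hαβ : α ≤ β) (hβ : a * (β - α) < β) :
    ∫⁻ t in Ioi c, ENNReal.ofReal (t ^ β) ∂μ ≤
      ENNReal.ofReal (α * c ^ (β - α) / (β - a * (β - α))) *
        ∫⁻ t in Ioi c, ENNReal.ofReal (t ^ α) ∂μ := by
  have truncations : Tendsto (fun n : ℕ => ∫⁻ t in Ioi c, ENNReal.ofReal (min t n ^ β) ∂μ) atTop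
      (nhds (∫⁻ t in Ioi c, ENNReal.ofReal (t ^ β) ∂μ)) := by
    refine lintegral_tendsto_of_tendsto_of_monotone (fun n => by fun_prop) ?_ ?_
    · filter_upwards [ae_restrict_mem measurableSet_Ioi] with t ht m n hmn
      have ht₀ : 0 ≤ t := (hc.trans ht).le
      have hβ₀ : 0 ≤ β := hα.trans hαβ
      dsimp only
      gcongr
    · refine ae_of_all _ fun t => tendsto_const_nhds.congr' ?_
      filter_upwards [tendsto_natCast_atTop_atTop.eventually_ge_atTop t] with n hn
      rw [min_eq_left hn]
  refine le_of_tendsto truncations ?_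
  filter_upwards [tendsto_natCast_atTop_atTop.eventually_gt_atTop c] with n hn
  exact h.setLIntegral_min_rpow_le hμ hc ha hα hαβ hβ hn

end TailMomentBound

theorem stmt18 (G : ℝ → ℝ) (q a : ℝ) (hq : 1 < q) (ha : 1 < a)
    (hGpos : ∀ t, 1 ≤ t → 0 ≤ G t)
    (hGanti : AntitoneOn G (Ici 1))
    (hGrc : ∀ t, 1 ≤ t → ContinuousWithinAt G (Ici t) t)
    (hGlim : Tendsto G atTop (nhds 0))
    (hGlim' : Tendsto (fun t => t ^ (q - 1) * G t) atTop (nhds 0))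
    -- `μG` is the Lebesgue–Stieltjes measure of `-G`, so that
    -- `∫ f ∂μG = -∫ f dG` as a Stieltjes integral.
    (μG : Measure ℝ)
    (hμG : ∀ s t : ℝ, 1 ≤ s → s ≤ t → μG (Ioc s t) = ENNReal.ofReal (G s - G t))
    -- finiteness of the q-moment
    (hqfin : ∫⁻ t in Ioi 1, ENNReal.ofReal (t ^ (q - 1)) ∂μG ≠ ⊤)
    -- the reverse Hölder inequality on level sets
    (hmain : ∀ t : ℝ, 1 ≤ t →
      ∫⁻ s in Ioi t, ENNReal.ofReal (s ^ (q - 1)) ∂μG ≤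
        ENNReal.ofReal (a * t ^ (q - 1) * G t))
    (p : ℝ) (hpq : q ≤ p) (hpa : a * (p - q) < p - 1) :
    (∫⁻ t in Ioi 1, ENNReal.ofReal (t ^ (p - 1)) ∂μG ≠ ⊤) ∧
      ∫⁻ t in Ioi 1, ENNReal.ofReal (t ^ (p - 1)) ∂μG ≤
        ENNReal.ofReal ((q - 1) / ((p - 1) - a * (p - q))) *
          ∫⁻ t in Ioi 1, ENNReal.ofReal (t ^ (q - 1)) ∂μG := by
  have tail (t : ℝ) (ht : 1 ≤ t) : μG (Ioi t) = ENNReal.ofReal (G t) := by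
    simpa only [sub_zero] using measure_Ioi_eq_ofReal_of_tendsto (fun s => hμG t s ht) hGlim
  have tailMomentBound : TailMomentBound μG 1 (q - 1) a := fun t ht => by
    rw [tail t ht, ← ENNReal.ofReal_mul (by positivity)]
    exact hmain t ht
  have moment_le : ∫⁻ t in Ioi 1, ENNReal.ofReal (t ^ (p - 1)) ∂μG ≤
      ENNReal.ofReal ((q - 1) / ((p - 1) - a * (p - q))) *
        ∫⁻ t in Ioi 1, ENNReal.ofReal (t ^ (q - 1)) ∂μG := by
    have finite_mass : μG (Ioi 1) ≠ ⊤ := by simp [tail 1 le_rfl]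
    simpa using tailMomentBound.setLIntegral_rpow_le finite_mass one_pos (by positivity)
      (sub_nonneg.2 hq.le) (sub_le_sub_right hpq 1) (by simpa using hpa)
  exact ⟨ne_top_of_le_ne_top (ENNReal.mul_ne_top ENNReal.ofReal_ne_top hqfin) moment_le, moment_le⟩
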